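/- arXiv:2202.00281 — 4 statements merged into one kernel-verified Lean document; each statement's English description precedes it below -/
import Mathlib

section
/- Let b : ℝ → ℝ be a smooth, nonnegative, integrable function and let ρ be a W^{2,2} solution of the Kazdan–Warner equation ρ'' = 1 − e^{−ρ} − b. Then for every s ∈ ℝ one has 0 ≤ ρ(s) ≤ max{2 ln 2, 4‖b‖_{L¹}²}. -/
open MeasureTheory Real

/-- `ρ` is a `W^{2,2}` solution of the Kazdan–Warner equation `ρ'' = 1 - e^{-ρ} - b`. -/
def IsW22SolutionKW (b ρ : ℝ → ℝ) : Prop :=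
  ContDiff ℝ 2 ρ ∧
  MeasureTheory.Integrable (fun s => (ρ s) ^ 2) ∧
  MeasureTheory.Integrable (fun s => (deriv ρ s) ^ 2) ∧
  MeasureTheory.Integrable (fun s => (deriv (deriv ρ) s) ^ 2) ∧
  ∀ s : ℝ, deriv (deriv ρ) s = 1 - Real.exp (-ρ s) - b s

/-!
A solution and its derivative vanish at infinity, so `ρ ≥ 0` by the maximum principle. Integrating
`ρ'' = (1 - e^{-ρ}) - b` over half-lines and over the whole line gives `|ρ'| ≤ B` and
`∫ (1 - e^{-ρ}) ≤ B`, where `B = ‖b‖_{L¹}`. Hence `ρ ≥ ρ(s) - B²` on the interval of radius `B`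
around `s`, where the integral of `1 - e^{-ρ}` is then at least `2B (1 - e^{B² - ρ(s)})`. It is also
at most `B`, so if `B > 0` then `e^{B² - ρ(s)} ≥ 1/2`, that is, `ρ(s) ≤ log 2 + B²`.
-/

open Filter Topology Set Metric
open scoped ENNReal NNReal

theorem tendsto_cocompact_zero_of_memLp_two_of_memLp_two_deriv {E : Type*} [NormedAddCommGroup E]
    [InnerProductSpace ℝ E] {f : ℝ → E} (hf : Differentiable ℝ f) (hf2 : MemLp f 2)
    (hf'2 : MemLp (deriv f) 2) : Tendsto f (cocompact ℝ) (𝓝 0) := by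
  have hderiv (x : ℝ) : HasDerivAt (fun y => ‖f y‖ ^ 2) (2 * inner ℝ (f x) (deriv f x)) x :=
    (hf x).hasDerivAt.norm_sq
  have hint : Integrable fun x => ‖f x‖ ^ 2 := (memLp_two_iff_integrable_sq_norm hf2.1).1 hf2
  have hint' : Integrable fun x => 2 * inner ℝ (f x) (deriv f x) := by
    refine ((hf2.norm.integrable_mul hf'2.norm).mono (hf2.1.inner hf'2.1)
      (.of_forall fun x => ?_)).const_mul 2
    simpa using abs_real_inner_le_norm (f x) (deriv f x)
  have hsq : Tendsto (fun x => ‖f x‖ ^ 2) (cocompact ℝ) (𝓝 0) := by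
    rw [cocompact_eq_atBot_atTop]
    exact (tendsto_zero_of_hasDerivAt_of_integrableOn_Iic (a := 0) (fun x _ => hderiv x)
        hint'.integrableOn hint.integrableOn).sup
      (tendsto_zero_of_hasDerivAt_of_integrableOn_Ioi (a := 0) (fun x _ => hderiv x)
        hint'.integrableOn hint.integrableOn)
  simpa [tendsto_zero_iff_norm_tendsto_zero] using hsq.sqrt

theorem deriv_deriv_nonneg_of_isLocalMin {f : ℝ → ℝ} {x : ℝ} (h : IsLocalMin f x)
    (hc : ContinuousAt f x) : 0 ≤ deriv (deriv f) x := by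
  by_contra! hneg
  have hmax : IsLocalMax f x := isLocalMax_of_deriv_deriv_neg hneg h.deriv_eq_zero hc
  have hconst : f =ᶠ[𝓝 x] fun _ => f x := by
    filter_upwards [h, hmax] with y hmin hmax using le_antisymm hmax hmin
  exact hneg.ne (by simpa using hconst.deriv.deriv_eq)

theorem nonneg_of_tendsto_cocompact_zero_of_deriv_deriv_neg {f : ℝ → ℝ} (hc : Continuous f)
    (hlim : Tendsto f (cocompact ℝ) (𝓝 0)) (hneg : ∀ x, f x < 0 → deriv (deriv f) x < 0) (x : ℝ) :
    0 ≤ f x := by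
  by_contra! hx
  obtain ⟨m, hm⟩ : ∃ m, ∀ y, f m ≤ f y :=
    hc.exists_forall_le' x ((hlim.eventually_const_lt hx).mono fun _ => le_of_lt)
  exact (hneg m ((hm x).trans_lt hx)).not_ge
    (deriv_deriv_nonneg_of_isLocalMin (.of_forall hm) hc.continuousAt)

section ImproperIntegral

variable {f f' φ : ℝ → ℝ} {a l m : ℝ}

theorem setIntegral_Ioi_le_sub_of_hasDerivAt_of_le (hcont : ContinuousOn f (Ici a))
    (hderiv : ∀ x ∈ Ioi a, HasDerivAt f (f' x) x) (hφ : IntegrableOn φ (Ioi a))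
    (hle : ∀ x ∈ Ioi a, φ x ≤ f' x) (hm : Tendsto f atTop (𝓝 m)) :
    ∫ x in Ioi a, φ x ≤ m - f a := by
  refine le_of_tendsto_of_tendsto (intervalIntegral_tendsto_integral_Ioi a hφ tendsto_id)
    (hm.sub_const (f a)) ?_
  filter_upwards [eventually_ge_atTop a] with t hat
  exact intervalIntegral.integral_le_sub_of_hasDeriv_right_of_le hat
    (hcont.mono Icc_subset_Ici_self) (fun x hx => (hderiv x hx.1).hasDerivWithinAt)
    ((integrableOn_Icc_iff_integrableOn_Ioc (by simp)).2 (hφ.mono_set Ioc_subset_Ioi_self))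
    fun x hx => hle x hx.1

theorem setIntegral_Iic_le_sub_of_hasDerivAt_of_le (hcont : ContinuousOn f (Iic a))
    (hderiv : ∀ x ∈ Iio a, HasDerivAt f (f' x) x) (hφ : IntegrableOn φ (Iic a))
    (hle : ∀ x ∈ Iio a, φ x ≤ f' x) (hl : Tendsto f atBot (𝓝 l)) :
    ∫ x in Iic a, φ x ≤ f a - l := by
  refine le_of_tendsto_of_tendsto (intervalIntegral_tendsto_integral_Iic a hφ tendsto_id)
    (hl.const_sub (f a)) ?_
  filter_upwards [eventually_le_atBot a] with t hta
  exact intervalIntegral.integral_le_sub_of_hasDeriv_right_of_le hta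
    (hcont.mono Icc_subset_Iic_self) (fun x hx => (hderiv x hx.2).hasDerivWithinAt)
    (hφ.mono_set Icc_subset_Iic_self) fun x hx => hle x hx.2

theorem integral_le_sub_of_hasDerivAt_of_le (hderiv : ∀ x, HasDerivAt f (f' x) x)
    (hφ : Integrable φ) (hle : ∀ x, φ x ≤ f' x) (hl : Tendsto f atBot (𝓝 l))
    (hm : Tendsto f atTop (𝓝 m)) : ∫ x, φ x ≤ m - l := by
  have hcont : Continuous f := continuous_iff_continuousAt.2 fun x => (hderiv x).continuousAt
  rw [← intervalIntegral.integral_Iic_add_Ioi (b := 0) hφ.integrableOn hφ.integrableOn]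
  linarith [setIntegral_Iic_le_sub_of_hasDerivAt_of_le (a := 0) hcont.continuousOn
      (fun x _ => hderiv x) hφ.integrableOn (fun x _ => hle x) hl,
    setIntegral_Ioi_le_sub_of_hasDerivAt_of_le (a := 0) hcont.continuousOn
      (fun x _ => hderiv x) hφ.integrableOn (fun x _ => hle x) hm]

theorem abs_le_integral_of_neg_le_deriv (hderiv : ∀ x, HasDerivAt f (f' x) x)
    (hlim : Tendsto f (cocompact ℝ) (𝓝 0)) (hφ : Integrable φ) (hφ_nonneg : 0 ≤ᵐ[volume] φ)
    (hle : ∀ x, -φ x ≤ f' x) (x : ℝ) : |f x| ≤ ∫ y, φ y := by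
  have hcont : Continuous f := continuous_iff_continuousAt.2 fun x => (hderiv x).continuousAt
  have hleft : ∫ y in Iic x, -φ y ≤ f x - 0 :=
    setIntegral_Iic_le_sub_of_hasDerivAt_of_le hcont.continuousOn (fun y _ => hderiv y)
      hφ.neg.integrableOn (fun y _ => hle y) (hlim.mono_left atBot_le_cocompact)
  have hright : ∫ y in Ioi x, -φ y ≤ 0 - f x :=
    setIntegral_Ioi_le_sub_of_hasDerivAt_of_le hcont.continuousOn (fun y _ => hderiv y)
      hφ.neg.integrableOn (fun y _ => hle y) (hlim.mono_left atTop_le_cocompact)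
  rw [integral_neg] at hleft hright
  have hset (s : Set ℝ) : ∫ y in s, φ y ≤ ∫ y, φ y := setIntegral_le_integral hφ hφ_nonneg
  exact abs_le.2 ⟨by linarith [hset (Iic x)], by linarith [hset (Ioi x)]⟩

theorem setIntegral_le_integral_of_sub_le_deriv {g : ℝ → ℝ} {s : Set ℝ} (hs : MeasurableSet s)
    (hderiv : ∀ x, HasDerivAt f (f' x) x) (hlim : Tendsto f (cocompact ℝ) (𝓝 0))
    (hφ : Integrable φ) (hg : IntegrableOn g s) (hg_nonneg : ∀ x ∉ s, 0 ≤ g x)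
    (hle : ∀ x, g x - φ x ≤ f' x) : ∫ x in s, g x ≤ ∫ x, φ x := by
  have hg' : Integrable (s.indicator g) := hg.integrable_indicator hs
  have h : ∫ x, (s.indicator g x - φ x) ≤ 0 - 0 :=
    integral_le_sub_of_hasDerivAt_of_le hderiv (hg'.sub hφ)
      (fun x => (sub_le_sub_right (indicator_le_self' (hg_nonneg ·) x) _).trans (hle x))
      (hlim.mono_left atBot_le_cocompact) (hlim.mono_left atTop_le_cocompact)
  rw [integral_sub hg' hφ, integral_indicator hs] at h
  linarith

end ImproperIntegral

theorem mul_measureReal_closedBall_le_setIntegral_comp {X : Type*} [PseudoMetricSpace X]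
    [MeasurableSpace X] [OpensMeasurableSpace X] {μ : Measure X} {f : X → ℝ} {G : ℝ → ℝ}
    {C : ℝ≥0} {x : X} {r : ℝ} (hG : Monotone G) (hf : LipschitzWith C f)
    (hμ : μ (closedBall x r) ≠ ∞) (hint : IntegrableOn (fun y => G (f y)) (closedBall x r) μ) :
    G (f x - C * r) * μ.real (closedBall x r) ≤ ∫ y in closedBall x r, G (f y) ∂μ := by
  refine setIntegral_ge_of_const_le_real measurableSet_closedBall hμ (fun y hy => hG ?_) hint
  have hdist : |f y - f x| ≤ C * r := hf.dist_le_mul_of_le hy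
  linarith [(abs_le.1 hdist).1]

namespace IsW22SolutionKW

variable {b ρ : ℝ → ℝ}

theorem tendsto_cocompact_zero (hρ : IsW22SolutionKW b ρ) : Tendsto ρ (cocompact ℝ) (𝓝 0) := by
  obtain ⟨hdiff, hρ2, hρ'2, -, -⟩ := hρ
  have hcont : Continuous ρ := hdiff.continuous
  exact tendsto_cocompact_zero_of_memLp_two_of_memLp_two_deriv (hdiff.differentiable two_ne_zero)
    ((memLp_two_iff_integrable_sq hcont.aestronglyMeasurable).2 hρ2)
    ((memLp_two_iff_integrable_sq (aestronglyMeasurable_deriv ρ volume)).2 hρ'2)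

theorem tendsto_deriv_cocompact_zero (hρ : IsW22SolutionKW b ρ) :
    Tendsto (deriv ρ) (cocompact ℝ) (𝓝 0) := by
  obtain ⟨hdiff, -, hρ'2, hρ''2, -⟩ := hρ
  exact tendsto_cocompact_zero_of_memLp_two_of_memLp_two_deriv hdiff.differentiable_deriv_two
    ((memLp_two_iff_integrable_sq (aestronglyMeasurable_deriv ρ volume)).2 hρ'2)
    ((memLp_two_iff_integrable_sq (aestronglyMeasurable_deriv (deriv ρ) volume)).2 hρ''2)

theorem hasDerivAt_deriv (hρ : IsW22SolutionKW b ρ) (s : ℝ) :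
    HasDerivAt (deriv ρ) (1 - exp (-ρ s) - b s) s := by
  obtain ⟨hdiff, -, -, -, hode⟩ := hρ
  exact hode s ▸ (hdiff.differentiable_deriv_two s).hasDerivAt

theorem nonneg (hρ : IsW22SolutionKW b ρ) (hb : ∀ s, 0 ≤ b s) (s : ℝ) : 0 ≤ ρ s := by
  refine nonneg_of_tendsto_cocompact_zero_of_deriv_deriv_neg hρ.1.continuous
    hρ.tendsto_cocompact_zero (fun x hx => ?_) s
  rw [(hρ.hasDerivAt_deriv x).deriv]
  linarith [hb x, one_lt_exp_iff.2 (neg_pos.2 hx)]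

theorem one_sub_exp_neg_nonneg (hρ : IsW22SolutionKW b ρ) (hb : ∀ s, 0 ≤ b s) (s : ℝ) :
    0 ≤ 1 - exp (-ρ s) :=
  sub_nonneg.2 (exp_le_one_iff.2 (neg_nonpos.2 (hρ.nonneg hb s)))

theorem lipschitzWith (hρ : IsW22SolutionKW b ρ) (hb : ∀ s, 0 ≤ b s) (hbi : Integrable b) :
    LipschitzWith (∫ s, b s).toNNReal ρ := by
  refine lipschitzWith_of_nnnorm_deriv_le (hρ.1.differentiable two_ne_zero) fun s => ?_
  rw [← norm_toNNReal]
  exact toNNReal_le_toNNReal <| abs_le_integral_of_neg_le_deriv hρ.hasDerivAt_deriv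
    hρ.tendsto_deriv_cocompact_zero hbi (.of_forall hb)
    (fun x => by linarith [hρ.one_sub_exp_neg_nonneg hb x]) s

theorem setIntegral_one_sub_exp_neg_le (hρ : IsW22SolutionKW b ρ) (hb : ∀ s, 0 ≤ b s)
    (hbi : Integrable b) {K : Set ℝ} (hK : IsCompact K) :
    ∫ s in K, (1 - exp (-ρ s)) ≤ ∫ s, b s := by
  have hcont : Continuous ρ := hρ.1.continuous
  exact setIntegral_le_integral_of_sub_le_deriv hK.measurableSet hρ.hasDerivAt_deriv
    hρ.tendsto_deriv_cocompact_zero hbi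
    ((by fun_prop : Continuous fun s => 1 - exp (-ρ s)).continuousOn.integrableOn_compact hK)
    (fun s _ => hρ.one_sub_exp_neg_nonneg hb s) fun _ => le_rfl

theorem one_sub_exp_neg_mul_two_mul_le (hρ : IsW22SolutionKW b ρ) (hb : ∀ s, 0 ≤ b s)
    (hbi : Integrable b) (s : ℝ) {r : ℝ} (hr : 0 ≤ r) :
    (1 - exp (-(ρ s - (∫ t, b t) * r))) * (2 * r) ≤ ∫ t, b t := by
  have hcont : Continuous ρ := hρ.1.continuous
  have hmono : Monotone fun x : ℝ => 1 - exp (-x) := fun x y hxy =>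
    sub_le_sub_left (exp_le_exp.2 (neg_le_neg hxy)) 1
  have hball := mul_measureReal_closedBall_le_setIntegral_comp (μ := volume) (x := s) (r := r)
    hmono (hρ.lipschitzWith hb hbi) measure_closedBall_lt_top.ne
    ((by fun_prop : Continuous fun t => 1 - exp (-ρ t)).continuousOn.integrableOn_compact
      (isCompact_closedBall s r))
  rw [Real.volume_real_closedBall hr, coe_toNNReal _ (integral_nonneg hb)] at hball
  exact hball.trans (hρ.setIntegral_one_sub_exp_neg_le hb hbi (isCompact_closedBall s r))

theorem le_log_two_add_sq (hρ : IsW22SolutionKW b ρ) (hb : ∀ s, 0 ≤ b s) (hbi : Integrable b)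
    (s : ℝ) : ρ s ≤ log 2 + (∫ t, b t) ^ 2 := by
  have hbound {r : ℝ} (hr : 0 ≤ r) := hρ.one_sub_exp_neg_mul_two_mul_le hb hbi s hr
  set B := ∫ t, b t
  obtain hB | hB : 0 = B ∨ 0 < B := (integral_nonneg hb).eq_or_lt
  · have hzero : (1 - exp (-ρ s)) * 2 ≤ 0 := by
      have hone := hbound zero_le_one
      rwa [← hB, zero_mul, sub_zero, mul_one] at hone
    have hexp : 1 ≤ exp (-ρ s) := by linarith
    linarith [one_le_exp_iff.1 hexp, log_pos one_lt_two, sq_nonneg B]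
  · have hexp : 2⁻¹ ≤ exp (-(ρ s - B * B)) := by nlinarith [hbound hB.le]
    rw [← exp_log two_pos, ← exp_neg, exp_le_exp] at hexp
    linarith

end IsW22SolutionKW

theorem kazdan_warner_pointwise_bound_general {b ρ : ℝ → ℝ} (hb_nonneg : ∀ s, 0 ≤ b s)
    (hb_L1 : Integrable b) (hρ : IsW22SolutionKW b ρ) (s : ℝ) :
    0 ≤ ρ s ∧ ρ s ≤ log 2 + (∫ t, |b t|) ^ 2 := by
  simp only [abs_of_nonneg (hb_nonneg _)]
  exact ⟨hρ.nonneg hb_nonneg s, hρ.le_log_two_add_sq hb_nonneg hb_L1 s⟩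

/-- Any `W^{2,2}` solution of the Kazdan–Warner equation satisfies the pointwise bound
`0 ≤ ρ(s) ≤ max {2 ln 2, 4 ‖b‖_{L¹}²}`. -/
theorem kazdan_warner_pointwise_bound
    (b : ℝ → ℝ) (hb_smooth : ContDiff ℝ (⊤ : ℕ∞) b) (hb_nonneg : ∀ s, 0 ≤ b s)
    (hb_L1 : Integrable b)
    (ρ : ℝ → ℝ) (hρ : IsW22SolutionKW b ρ) :
    ∀ s : ℝ, 0 ≤ ρ s ∧ ρ s ≤ max (2 * Real.log 2) (4 * (∫ s : ℝ, |b s|) ^ 2) := by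
  refine fun s => (kazdan_warner_pointwise_bound_general hb_nonneg hb_L1 hρ s).imp_right fun h => ?_
  linarith [le_max_left (2 * log 2) (4 * (∫ s, |b s|) ^ 2), sq_nonneg (∫ s, |b s|),
    le_max_right (2 * log 2) (4 * (∫ s, |b s|) ^ 2)]
end

section
/- Let b : ℝ → ℝ be a smooth, nonnegative, integrable and square-integrable function and let ρ be a W^{2,2} solution of the Kazdan–Warner equation ρ'' = 1 − e^{−ρ} − b. Then ‖ρ''‖_{L²} ≤ √(‖b‖_{L¹}) + ‖b‖_{L²}. -/
open MeasureTheory Real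

/-! Put `g x = 1 - e^{-x}`, which is increasing and vanishes at `0`, so that the equation reads
`b = g(ρ) - ρ''`. Integration by parts gives `∫ g(ρ) ρ'' = -∫ g'(ρ) (ρ')² ≤ 0`, so the cross term
in the expansion of `∫ b²` has a favourable sign and `‖ρ''‖_{L²} ≤ ‖b‖_{L²}`. The integrations are
justified by the boundedness of `ρ`, which follows from the integrability of `(ρ²)' = 2 ρ ρ'`. -/

open Bornology Set

lemma norm_sub_le_integral_norm_of_hasDerivAt {E : Type*} [NormedAddCommGroup E] [NormedSpace ℝ E]
    [CompleteSpace E] {f f' : ℝ → E} (hf : ∀ s, HasDerivAt f (f' s) s) (hf' : Integrable f')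
    (x y : ℝ) : ‖f y - f x‖ ≤ ∫ s, ‖f' s‖ := by
  rw [← intervalIntegral.integral_eq_sub_of_hasDerivAt (fun s _ => hf s) hf'.intervalIntegrable]
  exact intervalIntegral.norm_integral_le_integral_norm_uIoc.trans
    (setIntegral_le_integral hf'.norm (.of_forall fun _ => norm_nonneg _))

lemma isBounded_range_of_integrable_mul_deriv {u u' : ℝ → ℝ} (hu : ∀ s, HasDerivAt u (u' s) s)
    (huu' : Integrable fun s => u s * u' s) : IsBounded (range u) := by
  have hsq : ∀ s, HasDerivAt (fun s => u s ^ 2) (2 * (u s * u' s)) s := fun s =>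
    ((hu s).fun_pow 2).congr_deriv (by ring)
  have hbound : ∀ s, u s ^ 2 ≤ u 0 ^ 2 + ∫ t, ‖2 * (u t * u' t)‖ := fun s => by
    have := norm_sub_le_integral_norm_of_hasDerivAt hsq (huu'.const_mul 2) 0 s
    linarith [le_norm_self (u s ^ 2 - u 0 ^ 2)]
  exact isBounded_iff_forall_norm_le.2
    ⟨_, forall_mem_range.2 fun s => abs_le_sqrt (hbound s)⟩

lemma memLp_comp_of_locallyLipschitz {α E F : Type*} [MeasurableSpace α] {μ : Measure α}
    [NormedAddCommGroup E] [ProperSpace E] [NormedAddCommGroup F] {p : ENNReal} {g : E → F}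
    {f : α → E} (hg : LocallyLipschitz g) (hg0 : g 0 = 0) (hf : MemLp f p μ)
    (hfb : IsBounded (range f)) : MemLp (fun x => g (f x)) p μ := by
  obtain ⟨K, hK⟩ := (hg.locallyLipschitzOn (s := closure (insert 0 (range f))))
    |>.exists_lipschitzOnWith_of_compact (hfb.insert 0).isCompact_closure
  refine hf.of_le_mul (c := K) (hg.continuous.comp_aestronglyMeasurable hf.1)
    (.of_forall fun x => ?_)
  simpa [hg0] using hK.norm_sub_le (subset_closure (mem_insert_of_mem 0 (mem_range_self x)))
    (subset_closure (mem_insert 0 (range f)))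

section SecondDerivative

variable {g u u' u'' : ℝ → ℝ}

lemma integral_comp_mul_deriv_deriv_eq_neg (hg : ContDiff ℝ 1 g)
    (hu : ∀ s, HasDerivAt u (u' s) s) (hu' : ∀ s, HasDerivAt u' (u'' s) s)
    (hub : IsBounded (range u)) (hgu : MemLp (fun s => g (u s)) 2) (h1 : MemLp u' 2)
    (h2 : MemLp u'' 2) :
    ∫ s, g (u s) * u'' s = -∫ s, deriv g (u s) * u' s ^ 2 := by
  have hg' : Continuous (deriv g) := hg.continuous_deriv le_rfl
  have hu_cont : Continuous u := continuous_iff_continuousAt.2 fun s => (hu s).continuousAt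
  have hgu' : ∀ s, HasDerivAt (fun s => g (u s)) (deriv g (u s) * u' s) s := fun s =>
    (hg.differentiable one_ne_zero (u s)).hasDerivAt.comp s (hu s)
  obtain ⟨C, hC⟩ := hub.isCompact_closure.exists_bound_of_continuousOn hg'.continuousOn
  have hint : Integrable fun s => deriv g (u s) * u' s ^ 2 :=
    h1.integrable_sq.bdd_mul (hg'.comp hu_cont).aestronglyMeasurable
      (.of_forall fun s => hC _ (subset_closure (mem_range_self s)))
  have hparts := integral_mul_deriv_eq_deriv_mul_of_integrable (fun s _ => hgu' s)
    (fun s _ => hu' s) (hgu.integrable_mul h2) (by simpa [Pi.mul_def, sq, mul_assoc] using hint)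
    (hgu.integrable_mul h1)
  simpa only [sq, mul_assoc] using hparts

theorem integral_sq_deriv_deriv_le_of_monotone (hg : ContDiff ℝ 1 g) (hg_mono : Monotone g)
    (hg0 : g 0 = 0) (hu : ∀ s, HasDerivAt u (u' s) s) (hu' : ∀ s, HasDerivAt u' (u'' s) s)
    (h0 : MemLp u 2) (h1 : MemLp u' 2) (h2 : MemLp u'' 2) :
    ∫ s, u'' s ^ 2 ≤ ∫ s, (g (u s) - u'' s) ^ 2 := by
  have hub : IsBounded (range u) :=
    isBounded_range_of_integrable_mul_deriv hu (h0.integrable_mul h1)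
  have hgu : MemLp (fun s => g (u s)) 2 :=
    memLp_comp_of_locallyLipschitz hg.locallyLipschitz hg0 h0 hub
  have hcross : ∫ s, g (u s) * u'' s ≤ 0 := by
    rw [integral_comp_mul_deriv_deriv_eq_neg hg hu hu' hub hgu h1 h2, neg_nonpos]
    exact integral_nonneg fun s => mul_nonneg hg_mono.deriv_nonneg (sq_nonneg _)
  have hcross_int : Integrable fun s => 2 * (g (u s) * u'' s) :=
    (hgu.integrable_mul h2).const_mul 2
  have hdiff_int : Integrable fun s => (g (u s) - u'' s) ^ 2 := (hgu.sub h2).integrable_sq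
  calc ∫ s, u'' s ^ 2
      ≤ ∫ s, ((g (u s) - u'' s) ^ 2 + 2 * (g (u s) * u'' s)) :=
        integral_mono h2.integrable_sq (hdiff_int.add hcross_int) fun s => by
          linarith [sq_nonneg (g (u s))]
    _ = (∫ s, (g (u s) - u'' s) ^ 2) + 2 * ∫ s, g (u s) * u'' s := by
        rw [integral_add hdiff_int hcross_int, integral_const_mul]
    _ ≤ ∫ s, (g (u s) - u'' s) ^ 2 := by linarith

end SecondDerivative

theorem kazdan_warner_second_derivative_L2_bound_general {b ρ : ℝ → ℝ}
    (hρ : IsW22SolutionKW b ρ) :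
    √(∫ s, deriv (deriv ρ) s ^ 2) ≤ √(∫ s, b s ^ 2) := by
  obtain ⟨hC2, h0, h1, h2, hode⟩ := hρ
  have hC1 : ContDiff ℝ 1 (deriv ρ) := hC2.deriv' (n := 1)
  have hb : ∀ s, b s = 1 - exp (-ρ s) - deriv (deriv ρ) s := fun s => by linarith [hode s]
  have hg_mono : Monotone fun x : ℝ => 1 - exp (-x) := fun x y hxy => by
    dsimp only; gcongr
  simp only [hb]
  exact sqrt_le_sqrt <| integral_sq_deriv_deriv_le_of_monotone (g := fun x => 1 - exp (-x))
    (by fun_prop) hg_mono (by simp)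
    (fun s => (hC2.differentiable two_ne_zero s).hasDerivAt)
    (fun s => (hC1.differentiable one_ne_zero s).hasDerivAt)
    ((memLp_two_iff_integrable_sq hC2.continuous.aestronglyMeasurable).2 h0)
    ((memLp_two_iff_integrable_sq hC1.continuous.aestronglyMeasurable).2 h1)
    ((memLp_two_iff_integrable_sq (hC1.continuous_deriv le_rfl).aestronglyMeasurable).2 h2)

/-- For a `W^{2,2}` solution of the Kazdan–Warner equation one has the bound
`‖ρ''‖_{L²} ≤ √(‖b‖_{L¹}) + ‖b‖_{L²}`. -/
theorem kazdan_warner_second_derivative_L2_bound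
    (b : ℝ → ℝ) (hb_smooth : ContDiff ℝ (⊤ : ℕ∞) b) (hb_nonneg : ∀ s, 0 ≤ b s)
    (hb_L1 : Integrable b) (hb_L2 : Integrable fun s => (b s) ^ 2)
    (ρ : ℝ → ℝ) (hρ : IsW22SolutionKW b ρ) :
    Real.sqrt (∫ s : ℝ, (deriv (deriv ρ) s) ^ 2) ≤
      Real.sqrt (∫ s : ℝ, |b s|) + Real.sqrt (∫ s : ℝ, (b s) ^ 2) :=
  (kazdan_warner_second_derivative_L2_bound_general hρ).trans
    (le_add_of_nonneg_left (sqrt_nonneg _))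
end

section
/- For every continuous square-integrable function η : ℝ → ℝ there exists a twice continuously differentiable function ξ : ℝ → ℝ with ξ, ξ' and ξ'' square-integrable on ℝ such that ξ''(s) − ξ(s) = η(s) for all s ∈ ℝ. In other words, the operator D_0 : ξ ↦ ξ'' − ξ is surjective onto continuous L² functions. -/
open MeasureTheory Real

/-!
The equation `ξ'' - a² ξ = η` is solved by the Green kernel `-e^{-a|r|} / (2a)`. Each half of this
kernel is a multiple of an exponential probability law, so `ξ` is a multiple of the sum of two
averages of `η`: one over the past and one over the future, with exponentially distributed lag.
Averaging translates of a function against a probability measure does not increase its `L^p` norm.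
The past average `u` satisfies `u' = a (η - u)` and the future average `v` satisfies
`v' = a (v - η)`, so `ξ'` is a multiple of `u - v`, and differentiating once more gives back
`a² ξ + η`.
-/

open ProbabilityTheory Set
open scoped ENNReal

section TranslationAverage

lemma enorm_integral_le_eLpNorm {α E : Type*} [MeasurableSpace α] [NormedAddCommGroup E]
    [NormedSpace ℝ E] {ν : Measure α} [IsProbabilityMeasure ν] {p : ℝ≥0∞} (hp : 1 ≤ p)
    (f : α → E) : ‖∫ y, f y ∂ν‖ₑ ≤ eLpNorm f p ν := by
  by_cases hf : AEStronglyMeasurable f ν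
  · calc ‖∫ y, f y ∂ν‖ₑ ≤ ∫⁻ y, ‖f y‖ₑ ∂ν := enorm_integral_le_lintegral_enorm f
      _ = eLpNorm f 1 ν := eLpNorm_one_eq_lintegral_enorm.symm
      _ ≤ eLpNorm f p ν := eLpNorm_le_eLpNorm_of_exponent_le hp hf
  · simp [integral_non_aestronglyMeasurable hf]

variable {G : Type*} [AddGroup G] [MeasurableSpace G] [MeasurableAdd₂ G] [MeasurableNeg G]
  {μ ν : Measure G} [SFinite μ] [μ.IsAddRightInvariant]

lemma aestronglyMeasurable_comp_sub {X : Type*} [TopologicalSpace X] [SFinite ν] {f : G → X}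
    (hf : AEStronglyMeasurable f μ) :
    AEStronglyMeasurable (fun z : G × G => f (z.1 - z.2)) (μ.prod ν) :=
  hf.comp_quasiMeasurePreserving (quasiMeasurePreserving_sub_of_right_invariant μ ν)

variable {E : Type*} [NormedAddCommGroup E] [NormedSpace ℝ E] [IsProbabilityMeasure ν]
  {p : ℝ≥0∞} {f : G → E}

lemma eLpNorm_top_integral_comp_sub_le (f : G → E) :
    eLpNorm (fun x => ∫ y, f (x - y) ∂ν) ∞ μ ≤ eLpNorm f ∞ μ := by
  have hslice : ∀ᵐ x ∂μ, ∀ᵐ y ∂ν, ‖f (x - y)‖ₑ ≤ eLpNorm f ∞ μ :=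
    Measure.ae_ae_of_ae_prod <|
      (quasiMeasurePreserving_sub_of_right_invariant μ ν).ae (ae_le_eLpNormEssSup (f := f))
  refine essSup_le_of_ae_le _ ?_
  filter_upwards [hslice] with x hx
  exact (enorm_integral_le_eLpNorm le_top _).trans (essSup_le_of_ae_le _ hx)

lemma lintegral_enorm_integral_comp_sub_rpow_le (hp : 1 ≤ p) (hp_top : p ≠ ∞)
    (hf : AEStronglyMeasurable f μ) :
    ∫⁻ x, ‖∫ y, f (x - y) ∂ν‖ₑ ^ p.toReal ∂μ ≤ ∫⁻ x, ‖f x‖ₑ ^ p.toReal ∂μ := by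
  have hp₀ : p ≠ 0 := (one_pos.trans_le hp).ne'
  have jensen (x : G) :
      ‖∫ y, f (x - y) ∂ν‖ₑ ^ p.toReal ≤ ∫⁻ y, ‖f (x - y)‖ₑ ^ p.toReal ∂ν := by
    grw [enorm_integral_le_eLpNorm hp, eLpNorm_eq_lintegral_rpow_enorm_toReal hp₀ hp_top,
      one_div, ENNReal.rpow_inv_rpow (ENNReal.toReal_pos hp₀ hp_top).ne']
  calc ∫⁻ x, ‖∫ y, f (x - y) ∂ν‖ₑ ^ p.toReal ∂μ
      ≤ ∫⁻ x, ∫⁻ y, ‖f (x - y)‖ₑ ^ p.toReal ∂ν ∂μ := lintegral_mono jensen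
    _ = ∫⁻ y, ∫⁻ x, ‖f (x - y)‖ₑ ^ p.toReal ∂μ ∂ν :=
        lintegral_lintegral_swap ((aestronglyMeasurable_comp_sub hf).enorm.pow_const _)
    _ = ∫⁻ x, ‖f x‖ₑ ^ p.toReal ∂μ := by
        simp [lintegral_sub_right_eq_self (μ := μ) fun x => ‖f x‖ₑ ^ p.toReal]

lemma eLpNorm_integral_comp_sub_le (hp : 1 ≤ p) (hf : AEStronglyMeasurable f μ) :
    eLpNorm (fun x => ∫ y, f (x - y) ∂ν) p μ ≤ eLpNorm f p μ := by
  obtain rfl | hp_top := eq_or_ne p ∞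
  · exact eLpNorm_top_integral_comp_sub_le f
  · have hp₀ : p ≠ 0 := (one_pos.trans_le hp).ne'
    simp only [eLpNorm_eq_lintegral_rpow_enorm_toReal hp₀ hp_top]
    gcongr ?_ ^ _
    exact lintegral_enorm_integral_comp_sub_rpow_le hp hp_top hf

lemma memLp_integral_comp_sub (hp : 1 ≤ p) (hf : MemLp f p μ) :
    MemLp (fun x => ∫ y, f (x - y) ∂ν) p μ :=
  ⟨(aestronglyMeasurable_comp_sub hf.aestronglyMeasurable).integral_prod_right',
    (eLpNorm_integral_comp_sub_le hp hf.aestronglyMeasurable).trans_lt hf.eLpNorm_lt_top⟩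

end TranslationAverage

section ExponentialLaw

variable {E : Type*} [NormedAddCommGroup E] {p : ℝ≥0∞} {a : ℝ}

lemma exponentialPDFReal_eq (a x : ℝ) :
    exponentialPDFReal a x = if 0 ≤ x then a * exp (-(a * x)) else 0 := by
  simp [exponentialPDFReal, gammaPDFReal]

lemma exponentialPDFReal_le (ha : 0 ≤ a) (x : ℝ) : exponentialPDFReal a x ≤ a := by
  rw [exponentialPDFReal_eq]
  split_ifs with hx
  · exact mul_le_of_le_one_right ha (exp_le_one_iff.2 (neg_nonpos.2 (mul_nonneg ha hx)))
  · exact ha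

lemma measurable_exponentialPDF (a : ℝ) : Measurable (exponentialPDF a) :=
  (measurable_exponentialPDFReal a).ennreal_ofReal

lemma expMeasure_eq_withDensity (a : ℝ) :
    expMeasure a = volume.withDensity (exponentialPDF a) := rfl

lemma expMeasure_le_smul_volume (ha : 0 ≤ a) : expMeasure a ≤ ENNReal.ofReal a • volume := by
  rw [expMeasure_eq_withDensity, ← withDensity_const]
  exact withDensity_mono <| ae_of_all _ fun x =>
    ENNReal.ofReal_le_ofReal (exponentialPDFReal_le ha x)

lemma integrable_comp_sub_expMeasure (ha : 0 < a) (hp : 1 ≤ p) {f : ℝ → E} (hf : MemLp f p)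
    (s : ℝ) : Integrable (fun r => f (s - r)) (expMeasure a) :=
  have := isProbabilityMeasure_expMeasure ha
  ((hf.comp_measurePreserving (Measure.measurePreserving_sub_left volume s)).of_measure_le_smul
    ENNReal.ofReal_ne_top (expMeasure_le_smul_volume ha.le)).integrable hp

variable [NormedSpace ℝ E]

lemma integral_expMeasure (ha : 0 < a) (g : ℝ → E) :
    ∫ r, g r ∂expMeasure a = ∫ r, exponentialPDFReal a r • g r := by
  rw [expMeasure_eq_withDensity, integral_withDensity_eq_integral_toReal_smul
    (measurable_exponentialPDF a) (by simp [exponentialPDF])]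
  simp only [exponentialPDF, ENNReal.toReal_ofReal (exponentialPDFReal_nonneg ha _)]

lemma integrable_expMeasure_iff (ha : 0 < a) {g : ℝ → E} :
    Integrable g (expMeasure a) ↔ Integrable fun r => exponentialPDFReal a r • g r := by
  rw [expMeasure_eq_withDensity, integrable_withDensity_iff_integrable_smul'
    (measurable_exponentialPDF a) (by simp [exponentialPDF])]
  simp only [exponentialPDF, ENNReal.toReal_ofReal (exponentialPDFReal_nonneg ha _)]

lemma exponentialPDFReal_sub_smul (a s t : ℝ) (f : ℝ → E) :
    exponentialPDFReal a (s - t) • f t =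
      (a * exp (-(a * s))) • (Iic s).indicator (fun t => exp (a * t) • f t) t := by
  by_cases hts : t ≤ s
  · have hexp : exp (-(a * (s - t))) = exp (-(a * s)) * exp (a * t) := by
      rw [← exp_add]
      ring_nf
    simp [exponentialPDFReal_eq, hts, smul_smul, hexp, mul_assoc]
  · simp [exponentialPDFReal_eq, hts]

end ExponentialLaw

lemma hasDerivAt_integral_Iic {E : Type*} [NormedAddCommGroup E] [NormedSpace ℝ E]
    [CompleteSpace E] {g : ℝ → E} {s : ℝ} (hg : Continuous g) (hgs : IntegrableOn g (Iic s)) :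
    HasDerivAt (fun x => ∫ t in Iic x, g t) (g s) s := by
  have hg_Iic (x : ℝ) : IntegrableOn g (Iic x) :=
    (hgs.union (hg.integrableOn_Ioc (a := s) (b := x))).mono_set fun t ht =>
      (le_or_gt t s).imp id fun hst => ⟨hst, ht⟩
  have hsplit (x : ℝ) : ∫ t in Iic x, g t = (∫ t in Iic s, g t) + ∫ t in s..x, g t := by
    rw [← intervalIntegral.integral_Iic_sub_Iic hgs (hg_Iic x), add_sub_cancel]
  rw [funext hsplit]
  exact (hg.integral_hasStrictDerivAt s s).hasDerivAt.const_add _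

lemma contDiff_two_iff_deriv {𝕜 F : Type*} [NontriviallyNormedField 𝕜] [NormedAddCommGroup F]
    [NormedSpace 𝕜 F] {f : 𝕜 → F} :
    ContDiff 𝕜 2 f ↔
      Differentiable 𝕜 f ∧ Differentiable 𝕜 (deriv f) ∧ Continuous (deriv (deriv f)) := by
  rw [← one_add_one_eq_two, contDiff_succ_iff_deriv, contDiff_one_iff_deriv]
  simp

section ExponentialAverage

variable {E : Type*} [NormedAddCommGroup E] [NormedSpace ℝ E] {p : ℝ≥0∞} {a : ℝ} {f : ℝ → E}

/-- The average of `f` over the past of `s`, with exponentially distributed lag of rate `a`. -/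
noncomputable def pastExpAverage (a : ℝ) (f : ℝ → E) (s : ℝ) : E :=
  ∫ r, f (s - r) ∂expMeasure a

/-- The average of `f` over the future of `s`, with exponentially distributed lag of rate `a`;
it is encoded as the time reversal of `pastExpAverage`. -/
noncomputable def futureExpAverage (a : ℝ) (f : ℝ → E) (s : ℝ) : E :=
  pastExpAverage a (fun t => f (-t)) (-s)

lemma memLp_pastExpAverage (ha : 0 < a) (hp : 1 ≤ p) (hf : MemLp f p) :
    MemLp (pastExpAverage a f) p :=
  have := isProbabilityMeasure_expMeasure ha
  memLp_integral_comp_sub hp hf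

lemma memLp_futureExpAverage (ha : 0 < a) (hp : 1 ≤ p) (hf : MemLp f p) :
    MemLp (futureExpAverage a f) p :=
  have hneg := Measure.measurePreserving_neg (volume : Measure ℝ)
  (memLp_pastExpAverage ha hp (hf.comp_measurePreserving hneg)).comp_measurePreserving hneg

lemma pastExpAverage_eq_smul_integral_Iic (ha : 0 < a) (f : ℝ → E) (s : ℝ) :
    pastExpAverage a f s = (a * exp (-(a * s))) • ∫ t in Iic s, exp (a * t) • f t := by
  rw [pastExpAverage, integral_expMeasure ha, ← integral_sub_left_eq_self _ volume s,
    ← integral_indicator measurableSet_Iic, ← integral_smul]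
  simp only [sub_sub_cancel, exponentialPDFReal_sub_smul]

lemma integrableOn_Iic_exp_mul_smul (ha : 0 < a) (hp : 1 ≤ p) (hf : MemLp f p) (s : ℝ) :
    IntegrableOn (fun t => exp (a * t) • f t) (Iic s) := by
  have hint := ((integrable_expMeasure_iff ha).1
    (integrable_comp_sub_expMeasure ha hp hf s)).comp_sub_left s
  simp only [sub_sub_cancel, exponentialPDFReal_sub_smul] at hint
  rwa [← integrable_indicator_iff measurableSet_Iic,
    ← integrable_fun_smul_iff (c := a * exp (-(a * s))) (by positivity)]

variable [CompleteSpace E]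

lemma hasDerivAt_pastExpAverage (ha : 0 < a) (hp : 1 ≤ p) (hf : Continuous f) (hfp : MemLp f p)
    (s : ℝ) : HasDerivAt (pastExpAverage a f) (a • (f s - pastExpAverage a f s)) s := by
  have hint := hasDerivAt_integral_Iic (g := fun t => exp (a * t) • f t) (by fun_prop)
    (integrableOn_Iic_exp_mul_smul ha hp hfp s)
  have hexp : HasDerivAt (fun s => a * exp (-(a * s))) (-a * (a * exp (-(a * s)))) s := by
    refine ((hasDerivAt_const_mul a).fun_neg.exp.const_mul a).congr_deriv ?_
    ring
  have hcancel : a * exp (-(a * s)) * exp (a * s) = a := by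
    rw [mul_assoc, ← exp_add, neg_add_cancel, exp_zero, mul_one]
  rw [funext (pastExpAverage_eq_smul_integral_Iic ha f)]
  refine (hexp.fun_smul hint).congr_deriv ?_
  rw [smul_smul, hcancel, mul_smul, neg_smul, smul_sub, sub_eq_add_neg]

lemma hasDerivAt_futureExpAverage (ha : 0 < a) (hp : 1 ≤ p) (hf : Continuous f)
    (hfp : MemLp f p) (s : ℝ) :
    HasDerivAt (futureExpAverage a f) (a • (futureExpAverage a f s - f s)) s := by
  have hrefl : MemLp (fun t => f (-t)) p :=
    hfp.comp_measurePreserving (Measure.measurePreserving_neg volume)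
  refine ((hasDerivAt_pastExpAverage ha hp (by fun_prop) hrefl (-s)).scomp s
    (hasDerivAt_neg s)).congr_deriv ?_
  simp [futureExpAverage, ← smul_neg]

end ExponentialAverage

section GreenSolution

variable {E : Type*} [NormedAddCommGroup E] [NormedSpace ℝ E] [CompleteSpace E]
  {p : ℝ≥0∞} {a : ℝ} {f : ℝ → E}

/-- The solution of `ξ'' - a² ξ = f` given by convolution with the Green kernel
`-e^{-a|r|} / (2a)`. The constant is `(2 a²)⁻¹` because `pastExpAverage` and `futureExpAverage`
use the normalised density `a e^{-ar}`. -/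
noncomputable def greenSolution (a : ℝ) (f : ℝ → E) (s : ℝ) : E :=
  -(2 * a ^ 2)⁻¹ • (pastExpAverage a f s + futureExpAverage a f s)

lemma hasDerivAt_greenSolution (ha : 0 < a) (hp : 1 ≤ p) (hf : Continuous f) (hfp : MemLp f p)
    (s : ℝ) :
    HasDerivAt (greenSolution a f)
      ((2 * a)⁻¹ • (pastExpAverage a f s - futureExpAverage a f s)) s := by
  refine (((hasDerivAt_pastExpAverage ha hp hf hfp s).fun_add
    (hasDerivAt_futureExpAverage ha hp hf hfp s)).fun_const_smul _).congr_deriv ?_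
  match_scalars <;> field_simp
  ring

lemma deriv_greenSolution (ha : 0 < a) (hp : 1 ≤ p) (hf : Continuous f) (hfp : MemLp f p) :
    deriv (greenSolution a f) =
      fun s => (2 * a)⁻¹ • (pastExpAverage a f s - futureExpAverage a f s) :=
  funext fun s => (hasDerivAt_greenSolution ha hp hf hfp s).deriv

lemma hasDerivAt_deriv_greenSolution (ha : 0 < a) (hp : 1 ≤ p) (hf : Continuous f)
    (hfp : MemLp f p) (s : ℝ) :
    HasDerivAt (deriv (greenSolution a f)) (a ^ 2 • greenSolution a f s + f s) s := by
  rw [deriv_greenSolution ha hp hf hfp]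
  refine (((hasDerivAt_pastExpAverage ha hp hf hfp s).fun_sub
    (hasDerivAt_futureExpAverage ha hp hf hfp s)).fun_const_smul _).congr_deriv ?_
  simp only [greenSolution]
  match_scalars <;> field_simp
  ring

lemma deriv_deriv_greenSolution (ha : 0 < a) (hp : 1 ≤ p) (hf : Continuous f)
    (hfp : MemLp f p) :
    deriv (deriv (greenSolution a f)) = fun s => a ^ 2 • greenSolution a f s + f s :=
  funext fun s => (hasDerivAt_deriv_greenSolution ha hp hf hfp s).deriv

lemma contDiff_greenSolution (ha : 0 < a) (hp : 1 ≤ p) (hf : Continuous f) (hfp : MemLp f p) :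
    ContDiff ℝ 2 (greenSolution a f) := by
  have hdiff : Differentiable ℝ (greenSolution a f) := fun s =>
    (hasDerivAt_greenSolution ha hp hf hfp s).differentiableAt
  refine contDiff_two_iff_deriv.2 ⟨hdiff, fun s =>
    (hasDerivAt_deriv_greenSolution ha hp hf hfp s).differentiableAt, ?_⟩
  rw [deriv_deriv_greenSolution ha hp hf hfp]
  exact (hdiff.continuous.const_smul _).add hf

theorem operator_D_zero_surjective_general (ha : 0 < a) (hp : 1 ≤ p) {η : ℝ → E}
    (hη_cont : Continuous η) (hη : MemLp η p) :
    ∃ ξ : ℝ → E, ContDiff ℝ 2 ξ ∧ MemLp ξ p ∧ MemLp (deriv ξ) p ∧ MemLp (deriv (deriv ξ)) p ∧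
      ∀ s, deriv (deriv ξ) s - a ^ 2 • ξ s = η s := by
  have hpast := memLp_pastExpAverage ha hp hη
  have hfuture := memLp_futureExpAverage ha hp hη
  have hξ : MemLp (greenSolution a η) p := (hpast.add hfuture).const_smul _
  refine ⟨greenSolution a η, contDiff_greenSolution ha hp hη_cont hη, hξ, ?_⟩
  rw [deriv_deriv_greenSolution ha hp hη_cont hη, deriv_greenSolution ha hp hη_cont hη]
  exact ⟨(hpast.sub hfuture).const_smul _, (hξ.const_smul _).add hη,
    fun s => add_sub_cancel_left _ _⟩

end GreenSolution

/-- Surjectivity of the operator `D_0 : ξ ↦ ξ'' - ξ`: for every continuous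
square-integrable `η : ℝ → ℝ` there is a twice continuously differentiable `ξ`
with `ξ`, `ξ'`, `ξ''` square-integrable such that `ξ'' - ξ = η`. -/
theorem operator_D_zero_surjective
    (η : ℝ → ℝ) (hη_cont : Continuous η)
    (hη_L2 : Integrable fun s => (η s) ^ 2) :
    ∃ ξ : ℝ → ℝ, ContDiff ℝ 2 ξ ∧
      (Integrable fun s => (ξ s) ^ 2) ∧
      (Integrable fun s => (deriv ξ s) ^ 2) ∧
      (Integrable fun s => (deriv (deriv ξ) s) ^ 2) ∧
      ∀ s : ℝ, deriv (deriv ξ) s - ξ s = η s := by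
  obtain ⟨ξ, hξ, hξ₀, hξ₁, hξ₂, heq⟩ := operator_D_zero_surjective_general one_pos one_le_two
    hη_cont ((memLp_two_iff_integrable_sq hη_cont.aestronglyMeasurable).2 hη_L2)
  exact ⟨ξ, hξ, hξ₀.integrable_sq, hξ₁.integrable_sq, hξ₂.integrable_sq, by simpa using heq⟩
end

section
/- Let b : ℝ → ℝ be any function and let ρ₁, ρ₂ : ℝ → ℝ be twice continuously differentiable functions with ρ₁(s) → 0 and ρ₂(s) → 0 as s → ±∞, both satisfying the Kazdan–Warner equation ρ''(s) = 1 − e^{−ρ(s)} − b(s) for all s ∈ ℝ. Then ρ₁ = ρ₂. -/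
open Filter

/-!
At a positive maximum of `ρ₁ - ρ₂` the equation forces `(ρ₁ - ρ₂)'' > 0`, because the right-hand
side is strictly increasing in `ρ`; this contradicts the second derivative test. Such a maximum is
attained as soon as `ρ₁ - ρ₂` is positive somewhere, because `ρ₁ - ρ₂` tends to `0` at both ends.
Hence `ρ₁ ≤ ρ₂`, and equality follows by symmetry.
-/

lemma deriv_deriv_nonpos_of_isLocalMax {w : ℝ → ℝ} {x : ℝ} (hmax : IsLocalMax w x)
    (hw : ContinuousAt w x) : deriv (deriv w) x ≤ 0 := by
  by_contra! hpos
  -- The sufficient criterion makes `x` a local minimum as well, so `w` is constant near `x`.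
  have hmin : IsLocalMin w x := isLocalMin_of_deriv_deriv_pos hpos hmax.deriv_eq_zero hw
  have hconst : w =ᶠ[nhds x] fun _ => w x := by
    filter_upwards [hmax, hmin] with y hle hge using le_antisymm hle hge
  have hzero : deriv (deriv w) x = 0 := by simp [hconst.deriv.deriv_eq]
  exact hpos.ne' hzero

lemma le_of_tendsto_cocompact_of_not_isLocalMax {X α : Type*} [TopologicalSpace X]
    [LinearOrder α] [TopologicalSpace α] [OrderTopology α] {w : X → α} {c : α}
    (hw : Continuous w) (hlim : Tendsto w (cocompact X) (nhds c))
    (hmax : ∀ x, c < w x → ¬IsLocalMax w x) (x : X) : w x ≤ c := by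
  by_contra! hx
  obtain ⟨m, hm⟩ := hw.exists_forall_ge' x (hlim.eventually (eventually_le_nhds hx))
  exact hmax m (hx.trans_le (hm x)) (Eventually.of_forall hm)

lemma le_of_subsolution_of_supersolution {F : ℝ → ℝ → ℝ} {u v : ℝ → ℝ}
    (hF : ∀ s, StrictMono (F s))
    (hu : Differentiable ℝ u) (hu' : Differentiable ℝ (deriv u))
    (hv : Differentiable ℝ v) (hv' : Differentiable ℝ (deriv v))
    (hlim : Tendsto (u - v) (cocompact ℝ) (nhds 0))
    (hsub : ∀ s, F s (u s) ≤ deriv (deriv u) s)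
    (hsuper : ∀ s, deriv (deriv v) s ≤ F s (v s)) :
    u ≤ v := by
  have hcont : Continuous (u - v) := hu.continuous.sub hv.continuous
  have hderiv : deriv (u - v) = deriv u - deriv v := funext fun s => deriv_sub (hu s) (hv s)
  have hconvex : ∀ s, 0 < (u - v) s → 0 < deriv (deriv (u - v)) s := fun s hs => by
    rw [hderiv, deriv_sub (hu' s) (hv' s), sub_pos]
    calc deriv (deriv v) s ≤ F s (v s) := hsuper s
      _ < F s (u s) := hF s (sub_pos.mp hs)
      _ ≤ deriv (deriv u) s := hsub s
  exact fun s => sub_nonpos.mp <| le_of_tendsto_cocompact_of_not_isLocalMax hcont hlim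
    (fun t ht hmax =>
      (hconvex t ht).not_ge (deriv_deriv_nonpos_of_isLocalMax hmax hcont.continuousAt)) s

theorem kazdan_warner_uniqueness_general {F : ℝ → ℝ → ℝ} {u v : ℝ → ℝ}
    (hF : ∀ s, StrictMono (F s))
    (hu : Differentiable ℝ u) (hu' : Differentiable ℝ (deriv u))
    (hv : Differentiable ℝ v) (hv' : Differentiable ℝ (deriv v))
    (htop : Tendsto (u - v) atTop (nhds 0)) (hbot : Tendsto (u - v) atBot (nhds 0))
    (hode_u : ∀ s, deriv (deriv u) s = F s (u s))
    (hode_v : ∀ s, deriv (deriv v) s = F s (v s)) :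
    u = v := by
  have hlim : Tendsto (u - v) (cocompact ℝ) (nhds 0) := by
    rw [cocompact_eq_atBot_atTop]
    exact hbot.sup htop
  have hlim_symm : Tendsto (v - u) (cocompact ℝ) (nhds 0) := by
    rw [← neg_sub u v, ← neg_zero]
    exact hlim.neg
  exact le_antisymm
    (le_of_subsolution_of_supersolution hF hu hu' hv hv' hlim
      (fun s => (hode_u s).ge) (fun s => (hode_v s).le))
    (le_of_subsolution_of_supersolution hF hv hv' hu hu' hlim_symm
      (fun s => (hode_v s).ge) (fun s => (hode_u s).le))

lemma strictMono_one_sub_exp_neg_sub (c : ℝ) : StrictMono fun r => 1 - Real.exp (-r) - c :=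
  fun _ _ hlt => by
    dsimp only
    gcongr

/-- Uniqueness for the Kazdan–Warner equation: two twice continuously differentiable
solutions of `ρ'' = 1 - e^{-ρ} - b` decaying to `0` at both infinities coincide. -/
theorem kazdan_warner_uniqueness
    (b : ℝ → ℝ) (ρ₁ ρ₂ : ℝ → ℝ)
    (hρ₁ : ContDiff ℝ 2 ρ₁) (hρ₂ : ContDiff ℝ 2 ρ₂)
    (hρ₁_top : Tendsto ρ₁ atTop (nhds 0)) (hρ₁_bot : Tendsto ρ₁ atBot (nhds 0))
    (hρ₂_top : Tendsto ρ₂ atTop (nhds 0)) (hρ₂_bot : Tendsto ρ₂ atBot (nhds 0))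
    (hode₁ : ∀ s : ℝ, deriv (deriv ρ₁) s = 1 - Real.exp (-ρ₁ s) - b s)
    (hode₂ : ∀ s : ℝ, deriv (deriv ρ₂) s = 1 - Real.exp (-ρ₂ s) - b s) :
    ρ₁ = ρ₂ := by
  exact kazdan_warner_uniqueness_general (F := fun s r => 1 - Real.exp (-r) - b s)
    (fun s => strictMono_one_sub_exp_neg_sub (b s))
    (hρ₁.differentiable two_ne_zero) hρ₁.differentiable_deriv_two
    (hρ₂.differentiable two_ne_zero) hρ₂.differentiable_deriv_two
    (sub_zero (0 : ℝ) ▸ hρ₁_top.sub hρ₂_top) (sub_zero (0 : ℝ) ▸ hρ₁_bot.sub hρ₂_bot)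
    hode₁ hode₂
end
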